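/- The antiprism on n = 2k ≥ 6 vertices has no cycle double cover of size at least n+3; that is, every CDC of the antiprism on n vertices has size at most n+2. -/

import Mathlib

/-!
Write `n = 2k`. Call the edges `{v, v+1}` short and the edges `{v, v+2}` long; for a cycle `C` let
`a(C)` and `b(C)` be its numbers of short and long edges. Double covering gives
`∑ a(C) = ∑ b(C) = 2n`. Three facts about a single cycle suffice:

* `a(C)` is even, because short edges are exactly those joining vertices of different parity
  (`even_shortCount`);
* if `a(C) = 0` then `C` goes round all vertices of one parity, so `b(C) ≥ k` (`le_longCount`);
* if `b(C) = 0` then `C` goes round all vertices, so `a(C) ≥ 2k` (`le_shortCount`).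

Let `p`, `q`, `r` be the numbers of cycles with `a = 0`, `a = 2`, `a ≥ 4` respectively. Then
`2q + 4r ≤ 4k` and `kp + q ≤ 4k`. The second inequality gives `p ≤ 4`. If `p ≤ 2`, the first one
gives `p + q + r ≤ 2k + 2`. If `p ≥ 3`, then `q ≤ (4 - p) k`, and so
`4 (p + q + r) ≤ 4p + 4k + 2q ≤ 8k + 8`.
-/

open SimpleGraph

attribute [local instance] Classical.propDecidable

/-- A cycle in a graph: a connected, 2-regular subgraph. -/
def IsCycleSubgraph {V : Type*} {G : SimpleGraph V} (C : G.Subgraph) : Prop :=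
  C.coe.Connected ∧ ∀ v ∈ C.verts, (C.neighborSet v).ncard = 2

/-- A cycle double cover: a multiset of cycles covering every edge exactly twice
(counted with multiplicity). -/
def IsCDC {V : Type*} (G : SimpleGraph V) (S : Multiset G.Subgraph) : Prop :=
  (∀ C ∈ S, IsCycleSubgraph C) ∧
  ∀ e ∈ G.edgeSet, S.countP (fun C => e ∈ C.edgeSet) = 2

/-- Graph minor relation (via branch sets). -/
def HasGraphMinor {V : Type*} {W : Type*} (G : SimpleGraph V) (H : SimpleGraph W) : Prop :=
  ∃ f : W → Set V,
    (∀ w, (f w).Nonempty) ∧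
    (∀ w, (G.induce (f w)).Connected) ∧
    (Pairwise fun w₁ w₂ => Disjoint (f w₁) (f w₂)) ∧
    ∀ ⦃w₁ w₂⦄, H.Adj w₁ w₂ → ∃ v₁ ∈ f w₁, ∃ v₂ ∈ f w₂, G.Adj v₁ v₂

/-- Planarity, via Wagner's theorem: no `K₅` minor and no `K_{3,3}` minor. -/
def IsPlanar {V : Type*} (G : SimpleGraph V) : Prop :=
  ¬ HasGraphMinor G (completeGraph (Fin 5)) ∧
  ¬ HasGraphMinor G (completeBipartiteGraph (Fin 3) (Fin 3))

/-- `k`-connectivity: more than `k` vertices, and removing fewer than `k`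
vertices leaves a connected graph. -/
def IsKConnected {V : Type*} [Fintype V] (k : ℕ) (G : SimpleGraph V) : Prop :=
  k < Fintype.card V ∧ ∀ s : Set V, s.ncard < k → (G.induce sᶜ).Connected

/-- A Hamiltonian cycle: a cycle through all vertices. -/
def IsHamCycle {V : Type*} (G : SimpleGraph V) (C : G.Subgraph) : Prop :=
  IsCycleSubgraph C ∧ C.verts = Set.univ

/-- The antiprism on `2k` vertices: the square of the cycle `C_{2k}`. -/
def antiprism (k : ℕ) : SimpleGraph (ZMod (2 * k)) :=
  SimpleGraph.fromRel fun v w => w = v + 1 ∨ w = v + 2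

section Cycle

variable {k : ℕ}

lemma natCast_ne_zero_of_lt {m : ℕ} (h0 : 0 < m) (h : m < 2 * k) : (m : ZMod (2 * k)) ≠ 0 := by
  rw [Ne, ZMod.natCast_eq_zero_iff]
  exact fun hd => absurd (Nat.le_of_dvd h0 hd) (by omega)

lemma small_ne_zero (hk : 3 ≤ k) : (1 : ZMod (2 * k)) ≠ 0 ∧ (2 : ZMod (2 * k)) ≠ 0 ∧
    (3 : ZMod (2 * k)) ≠ 0 ∧ (4 : ZMod (2 * k)) ≠ 0 := by
  refine ⟨?_, ?_, ?_, ?_⟩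
  · exact_mod_cast natCast_ne_zero_of_lt (k := k) (m := 1) (by omega) (by omega)
  · exact_mod_cast natCast_ne_zero_of_lt (k := k) (m := 2) (by omega) (by omega)
  · exact_mod_cast natCast_ne_zero_of_lt (k := k) (m := 3) (by omega) (by omega)
  · exact_mod_cast natCast_ne_zero_of_lt (k := k) (m := 4) (by omega) (by omega)

/-- Indicator of the edge `{v, v + d}` of `C`: the short edge at `v` for `d = 1`, the long one for
`d = 2`. -/
noncomputable def edgeInd (C : (antiprism k).Subgraph) (d v : ZMod (2 * k)) : ℕ :=
  if C.Adj v (v + d) then 1 else 0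

/-- The number of `v` with `{v, v + d}` an edge of `C`: the number of short edges for `d = 1`, and
of long edges for `d = 2`. -/
noncomputable def edgeCount [NeZero (2 * k)] (C : (antiprism k).Subgraph) (d : ZMod (2 * k)) : ℕ :=
  ∑ v, edgeInd C d v

lemma adj_cases {v w : ZMod (2 * k)} (h : (antiprism k).Adj v w) :
    w = v + 1 ∨ w = v - 1 ∨ w = v + 2 ∨ w = v - 2 := by
  simp only [antiprism, SimpleGraph.fromRel_adj] at h
  obtain ⟨-, (h | h) | (h | h)⟩ := h
  · exact Or.inl h
  · exact Or.inr (Or.inr (Or.inl h))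
  · exact Or.inr (Or.inl (by rw [h]; ring))
  · exact Or.inr (Or.inr (Or.inr (by rw [h]; ring)))

/-- The degree of `v` in `C`, as a sum over the four potential edges at `v`. -/
lemma ncard_neighborSet (hk : 3 ≤ k) (C : (antiprism k).Subgraph) (v : ZMod (2 * k)) :
    (C.neighborSet v).ncard =
      edgeInd C 1 v + edgeInd C 1 (v - 1) + edgeInd C 2 v + edgeInd C 2 (v - 2) := by
  obtain ⟨h1, h2, h3, h4⟩ := small_ne_zero hk
  have hset : C.neighborSet v =
      ((({v + 1, v - 1, v + 2, v - 2} : Finset (ZMod (2 * k))).filter (C.Adj v) :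
        Finset (ZMod (2 * k))) : Set (ZMod (2 * k))) := by
    ext w
    simp only [Subgraph.mem_neighborSet, Finset.coe_filter, Finset.mem_insert,
      Finset.mem_singleton, Set.mem_ofPred_eq]
    exact ⟨fun h => ⟨adj_cases h.adj_sub, h⟩, fun h => h.2⟩
  have e12 : v + 1 ≠ v - 1 := fun h => h2 (by linear_combination h)
  have e13 : v + 1 ≠ v + 2 := fun h => h1 (by linear_combination -h)
  have e14 : v + 1 ≠ v - 2 := fun h => h3 (by linear_combination h)
  have e23 : v - 1 ≠ v + 2 := fun h => h3 (by linear_combination -h)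
  have e24 : v - 1 ≠ v - 2 := fun h => h1 (by linear_combination h)
  have e34 : v + 2 ≠ v - 2 := fun h => h4 (by linear_combination h)
  rw [hset, Set.ncard_coe_finset, Finset.card_filter, Finset.sum_insert (by simp [e12, e13, e14]),
    Finset.sum_insert (by simp [e23, e24]), Finset.sum_insert (by simp [e34]),
    Finset.sum_singleton]
  simp only [edgeInd, sub_add_cancel, C.adj_comm (v - 1) v, C.adj_comm (v - 2) v]
  ring

lemma degree_eq_zero_or_two {C : (antiprism k).Subgraph} (hC : IsCycleSubgraph C)
    (v : ZMod (2 * k)) : (C.neighborSet v).ncard = 0 ∨ (C.neighborSet v).ncard = 2 := by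
  by_cases hv : v ∈ C.verts
  · exact Or.inr (hC.2 v hv)
  · left
    have : C.neighborSet v = ∅ := by
      ext w
      simp only [Subgraph.mem_neighborSet, Set.mem_empty_iff_false, iff_false]
      exact fun h => hv h.fst_mem
    simp [this]

lemma edgeInd_le_one (C : (antiprism k).Subgraph) (d v : ZMod (2 * k)) : edgeInd C d v ≤ 1 := by
  unfold edgeInd
  split <;> simp

lemma adj_of_edgeInd {C : (antiprism k).Subgraph} {d v : ZMod (2 * k)} (h : edgeInd C d v = 1) :
    C.Adj v (v + d) := by
  by_contra hn
  simp [edgeInd, hn] at h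

variable [NeZero (2 * k)]

/-- With `φ v` the parity of `v`, the sum `∑ φ v * deg v` vanishes mod 2, and it counts each short
edge an odd and each long edge an even number of times. -/
lemma even_shortCount (hk : 3 ≤ k) {C : (antiprism k).Subgraph} (hC : IsCycleSubgraph C) :
    Even (edgeCount C 1) := by
  let φ : ZMod (2 * k) →+* ZMod 2 := ZMod.castHom (dvd_mul_right 2 k) (ZMod 2)
  have hz : ∀ v : ZMod (2 * k), (edgeInd C 1 v : ZMod 2) + edgeInd C 1 (v - 1) + edgeInd C 2 v
      + edgeInd C 2 (v - 2) = 0 := by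
    intro v
    have h := ncard_neighborSet hk C v
    have h2 : ((C.neighborSet v).ncard : ZMod 2) = 0 := by
      rcases degree_eq_zero_or_two hC v with h | h <;> rw [h]
      · rfl
      · rfl
    rw [h] at h2
    exact_mod_cast h2
  have shift : ∀ d : ZMod (2 * k), ∑ v, φ v * (edgeInd C d (v - d) : ZMod 2)
      = ∑ v, φ (v + d) * (edgeInd C d v : ZMod 2) := by
    intro d
    rw [← Equiv.sum_comp (Equiv.addRight d)]
    simp
  have h0 : ∑ v, φ v * ((edgeInd C 1 v : ZMod 2) + edgeInd C 1 (v - 1) + edgeInd C 2 v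
      + edgeInd C 2 (v - 2)) = 0 := Finset.sum_eq_zero fun v _ => by rw [hz, mul_zero]
  simp only [mul_add, Finset.sum_add_distrib] at h0
  rw [shift 1, shift 2, ← Finset.sum_add_distrib, add_assoc, ← Finset.sum_add_distrib,
    ← Finset.sum_add_distrib] at h0
  have key : ∑ v, (edgeInd C 1 v : ZMod 2) = 0 := by
    rw [← h0]
    refine Finset.sum_congr rfl fun v _ => ?_
    have two : (2 : ZMod 2) = 0 := rfl
    have φ2 : φ 2 = 0 := by rw [map_ofNat]; rfl
    rw [map_add, map_add, map_one, φ2]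
    linear_combination (-φ v * edgeInd C 1 v - φ v * edgeInd C 2 v) * two
  rw [← ZMod.natCast_eq_zero_iff_even, edgeCount, Nat.cast_sum, key]

/-- If whenever `C` passes through `v` it follows the edge `{v, v + d}`, then it contains the
`m` edges `{v₀ + i d, v₀ + (i + 1) d}` with `i < m`, distinct as long as the multiples `i d` are. -/
lemma le_edgeCount {C : (antiprism k).Subgraph} (hC : IsCycleSubgraph C) (d : ZMod (2 * k)) (m : ℕ)
    (hstep : ∀ v ∈ C.verts, C.Adj v (v + d))
    (hinj : ∀ i < m, ∀ j < m, (i : ZMod (2 * k)) * d = j * d → i = j) : m ≤ edgeCount C d := by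
  obtain ⟨v₀, hv₀⟩ := hC.1.nonempty
  have hmem : ∀ i : ℕ, v₀ + (i : ZMod (2 * k)) * d ∈ C.verts := by
    intro i
    induction i with
    | zero => simpa using hv₀
    | succ i ih =>
      have := (hstep _ ih).snd_mem
      rwa [show v₀ + ((i + 1 : ℕ) : ZMod (2 * k)) * d = v₀ + i * d + d by push_cast; ring]
  rw [edgeCount]
  simp only [edgeInd]
  rw [← Finset.card_filter]
  conv_lhs => rw [← Finset.card_range m]
  refine Finset.card_le_card_of_injOn (fun i : ℕ => v₀ + (i : ZMod (2 * k)) * d) ?_ ?_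
  · intro i _
    simpa using hstep _ (hmem i)
  · intro i hi j hj hij
    simp only [Finset.coe_range, Set.mem_Iio] at hi hj
    exact hinj i hi j hj (add_left_cancel hij)

lemma edgeInd_eq_zero {C : (antiprism k).Subgraph} {d : ZMod (2 * k)} (h : edgeCount C d = 0)
    (v : ZMod (2 * k)) : edgeInd C d v = 0 := by
  rw [edgeCount, Finset.sum_eq_zero_iff] at h
  exact h v (Finset.mem_univ v)

lemma le_longCount (hk : 3 ≤ k) {C : (antiprism k).Subgraph} (hC : IsCycleSubgraph C)
    (h : edgeCount C 1 = 0) : k ≤ edgeCount C 2 := by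
  refine le_edgeCount hC 2 k (fun v hv => adj_of_edgeInd ?_) fun i hi j hj hij => ?_
  · have hd := ncard_neighborSet hk C v
    rw [hC.2 v hv, edgeInd_eq_zero h, edgeInd_eq_zero h] at hd
    have := edgeInd_le_one C 2 v
    have := edgeInd_le_one C 2 (v - 2)
    omega
  · have hij' : ((i * 2 : ℕ) : ZMod (2 * k)) = ((j * 2 : ℕ) : ZMod (2 * k)) := by
      push_cast; exact hij
    rw [ZMod.natCast_eq_natCast_iff', Nat.mod_eq_of_lt (by omega), Nat.mod_eq_of_lt (by omega)]
      at hij'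
    omega

lemma le_shortCount (hk : 3 ≤ k) {C : (antiprism k).Subgraph} (hC : IsCycleSubgraph C)
    (h : edgeCount C 2 = 0) : 2 * k ≤ edgeCount C 1 := by
  refine le_edgeCount hC 1 (2 * k) (fun v hv => adj_of_edgeInd ?_) fun i hi j hj hij => ?_
  · have hd := ncard_neighborSet hk C v
    rw [hC.2 v hv, edgeInd_eq_zero h, edgeInd_eq_zero h] at hd
    have := edgeInd_le_one C 1 v
    have := edgeInd_le_one C 1 (v - 1)
    omega
  · rw [mul_one, mul_one, ZMod.natCast_eq_natCast_iff', Nat.mod_eq_of_lt hi,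
      Nat.mod_eq_of_lt hj] at hij
    exact hij

/-- Splitting a family of cycles into the `p` cycles without short edges, the `q` cycles with
exactly two, and the `r` cycles with at least four. -/
lemma exists_split (hk : 3 ≤ k) (S : Multiset (antiprism k).Subgraph)
    (hS : ∀ C ∈ S, IsCycleSubgraph C) :
    ∃ p q r : ℕ, Multiset.card S = p + q + r ∧
      2 * q + 4 * r ≤ (S.map fun C => edgeCount C 1).sum ∧
      p * k + q ≤ (S.map fun C => edgeCount C 2).sum := by
  induction S using Multiset.induction_on with
  | empty => exact ⟨0, 0, 0, by simp⟩
  | cons C S ih =>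
    obtain ⟨p, q, r, h1, h2, h3⟩ := ih fun D hD => hS D (Multiset.mem_cons_of_mem hD)
    have hC := hS C (Multiset.mem_cons_self C S)
    obtain ⟨m, hm⟩ := even_shortCount hk hC
    have hl := le_longCount hk hC
    have hs := le_shortCount hk hC
    simp only [Multiset.card_cons, Multiset.map_cons, Multiset.sum_cons]
    rcases Nat.lt_or_ge m 1 with h | h
    · have := hl (by omega)
      exact ⟨p + 1, q, r, by omega, by omega, by rw [add_mul]; omega⟩
    rcases Nat.lt_or_ge m 2 with h' | h'
    · have : edgeCount C 2 ≠ 0 := fun h0 => by have := hs h0; omega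
      exact ⟨p, q + 1, r, by omega, by omega, by omega⟩
    · exact ⟨p, q, r + 1, by omega, by omega, by omega⟩

lemma sum_edgeCount {S : Multiset (antiprism k).Subgraph} (hS : IsCDC (antiprism k) S)
    {d : ZMod (2 * k)} (hd : ∀ v, (antiprism k).Adj v (v + d)) :
    (S.map fun C => edgeCount C d).sum = 4 * k := by
  have hv : ∀ v, (S.map fun C => edgeInd C d v).sum = 2 := by
    intro v
    refine Eq.trans ?_ (hS.2 s(v, v + d) (hd v))
    clear hS
    induction S using Multiset.induction_on with
    | empty => simp
    | cons C S ih =>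
      rw [Multiset.map_cons, Multiset.sum_cons, ih, Multiset.countP_cons, add_comm]
      simp [edgeInd]
  simp only [edgeCount]
  rw [Multiset.sum_map_sum]
  simp only [hv, Finset.sum_const, Finset.card_univ, ZMod.card, smul_eq_mul]
  ring

end Cycle

/-- The antiprism on `n = 2k ≥ 6` vertices has no CDC of size at least `n + 3`:
every CDC has size at most `n + 2`. -/
theorem statement_8 (k : ℕ) (hk : 3 ≤ k)
    (S : Multiset (antiprism k).Subgraph) (hS : IsCDC (antiprism k) S) :
    Multiset.card S ≤ 2 * k + 2 := by
  have : NeZero (2 * k) := ⟨by omega⟩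
  obtain ⟨h1, h2, -, -⟩ := small_ne_zero hk
  have hA := sum_edgeCount hS (d := 1) fun v => by simp [antiprism, h1]
  have hB := sum_edgeCount hS (d := 2) fun v => by simp [antiprism, h2]
  obtain ⟨p, q, r, hc, ha, hb⟩ := exists_split hk S hS.1
  rw [hA] at ha
  rw [hB] at hb
  have hp : p ≤ 4 := Nat.le_of_mul_le_mul_right (by omega : p * k ≤ 4 * k) (by omega)
  interval_cases p <;> omega
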